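/- (Corollary 2, part 1: missingness-adjusted outcome regression.) Fix d = (d1,d2) in {(1,1),(0,1),(1,0)} and d' = (0,0), with P(D = d) > 0. Suppose Assumption DID holds for d and for d', Assumption MAR holds, P(D = d | X) > 0 and P(D = d' | X) > 0 a.s., and all displayed expectations are finite. Then E[(S/q_{d2}(X)) · 1{D = d}]^{-1} · E[(S/q_{d2}(X)) · 1{D = d} · (ΔY − m_{d'}(X))] = τ_{dd'}. -/

import Mathlib

open MeasureTheory Set
open scoped Classical

noncomputable section

namespace DIDMissing

variable {Ω : Type*} {𝓧 : Type*}

/-- Real-valued indicator of a set. -/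
def ind (A : Set Ω) : Ω → ℝ := A.indicator fun _ => (1 : ℝ)

/-- All treatment paths `{0,1}²` (coded as reals). -/
def allPaths : Set (ℝ × ℝ) := {(0, 0), (0, 1), (1, 0), (1, 1)}

/-- The three treated paths `{(1,1), (0,1), (1,0)}`. -/
def threePaths : Set (ℝ × ℝ) := {(1, 1), (0, 1), (1, 0)}

/-- The event `{D = d}` for a treatment path `d = (d₁, d₂)`. -/
def evD (D1 D2 : Ω → ℝ) (d : ℝ × ℝ) : Set Ω := {ω | D1 ω = d.1 ∧ D2 ω = d.2}

/-- The event `{D₂ = b}`. -/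
def evD2 (D2 : Ω → ℝ) (b : ℝ) : Set Ω := {ω | D2 ω = b}

/-- `g` is a (measurable-in-the-covariate) version of the conditional mean `E[Z ∣ A, X]`:
for every bounded measurable `h`, `E[1_A · Z · h(X)] = E[1_A · g(X) · h(X)]`. -/
def IsCondMeanGiven [MeasurableSpace Ω] [MeasurableSpace 𝓧] (P : Measure Ω) (X : Ω → 𝓧)
    (A : Set Ω) (Z : Ω → ℝ) (g : 𝓧 → ℝ) : Prop :=
  Measurable g ∧
    ∀ h : 𝓧 → ℝ, Measurable h → (∃ C, ∀ x, |h x| ≤ C) →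
      ∫ ω, ind A ω * Z ω * h (X ω) ∂P = ∫ ω, ind A ω * g (X ω) * h (X ω) ∂P

/-- Assumption DID for a path `d` relative to `d' = (0,0)`:
(i) no anticipation, `E[Y₀(d) ∣ D = d, X] = E[Y₀(0,0) ∣ D = d, X]` a.s., stated in the
version-free integral form; and (ii) conditional parallel trends, stated as the existence
of a common version of `E[Y₂(0,0) − Y₀(0,0) ∣ X]` and `E[Y₂(0,0) − Y₀(0,0) ∣ D = d, X]`. -/
def DID [MeasurableSpace Ω] [MeasurableSpace 𝓧] (P : Measure Ω) (X : Ω → 𝓧)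
    (D1 D2 : Ω → ℝ) (Y0p Y2p : ℝ × ℝ → Ω → ℝ) (d : ℝ × ℝ) : Prop :=
  (∀ h : 𝓧 → ℝ, Measurable h → (∃ C, ∀ x, |h x| ≤ C) →
      ∫ ω, ind (evD D1 D2 d) ω * Y0p d ω * h (X ω) ∂P
        = ∫ ω, ind (evD D1 D2 d) ω * Y0p (0, 0) ω * h (X ω) ∂P) ∧
  (∃ tr : 𝓧 → ℝ,
      IsCondMeanGiven P X Set.univ (fun ω => Y2p (0, 0) ω - Y0p (0, 0) ω) tr ∧
      IsCondMeanGiven P X (evD D1 D2 d) (fun ω => Y2p (0, 0) ω - Y0p (0, 0) ω) tr)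

/-- Assumption MAR: `S ⟂ (D₁, ΔY) ∣ (D₂, X)`, where `q d₂` is a version of the
missing-data probability `P(S = 1 ∣ D₂ = d₂, X)`, which is `(0,1]`-valued a.s. -/
def MAR [MeasurableSpace Ω] [MeasurableSpace 𝓧] (P : Measure Ω) (X : Ω → 𝓧)
    (D1 D2 S Y0 Y2 : Ω → ℝ) (q : ℝ → 𝓧 → ℝ) : Prop :=
  (∀ d2 ∈ ({0, 1} : Set ℝ), IsCondMeanGiven P X (evD2 D2 d2) S (q d2)) ∧
  (∀ d2 ∈ ({0, 1} : Set ℝ), ∀ᵐ ω ∂P, 0 < q d2 (X ω) ∧ q d2 (X ω) ≤ 1) ∧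
  (∀ d2 ∈ ({0, 1} : Set ℝ), ∀ f : ℝ × ℝ → ℝ, Measurable f → (∃ C, ∀ p, |f p| ≤ C) →
      ∀ h : 𝓧 → ℝ, Measurable h → (∃ C, ∀ x, |h x| ≤ C) →
        ∫ ω, ind (evD2 D2 d2) ω * S ω * f (D1 ω, Y2 ω - Y0 ω) * h (X ω) ∂P
          = ∫ ω, ind (evD2 D2 d2) ω * q d2 (X ω) * f (D1 ω, Y2 ω - Y0 ω) * h (X ω) ∂P)

/-- The path-dependent ATT `τ_{d,(0,0)} = E[Y₂(d) − Y₂(0,0) ∣ D = d]`. -/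
def tau [MeasurableSpace Ω] (P : Measure Ω) (D1 D2 : Ω → ℝ)
    (Y2p : ℝ × ℝ → Ω → ℝ) (d : ℝ × ℝ) : ℝ :=
  (P (evD D1 D2 d)).toReal⁻¹ * ∫ ω in evD D1 D2 d, (Y2p d ω - Y2p (0, 0) ω) ∂P

/-!
MAR says that on `{D₂ = d₂}` the weights `S` and `q_{d₂}(X)` give `((D₁, ΔY), X)` the same law:
the two laws agree on rectangles. Reweighting both by `1{D₁ = d₁} / q_{d₂}(X)` shows that the
inverse probability weights restore the law of `(ΔY, X)` on `{D = d}`, so the ratio is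
`E[ΔY − m_{d'}(X) ∣ D = d]`. Parallel trends for `d` and `d'`, which share the unconditional trend
given `X`, together with the overlap of `d'` on `{D = d}`, turn `E[m_{d'}(X) ∣ D = d]` into
`E[Y₂(d') − Y₀(d') ∣ D = d]`, and no anticipation cancels the period-0 outcomes.
-/

section Indicator

variable {A : Set Ω}

theorem abs_ind_le_one (A : Set Ω) (ω : Ω) : |ind A ω| ≤ 1 := by
  by_cases hω : ω ∈ A <;> simp [ind, hω]

theorem ind_nonneg (A : Set Ω) (ω : Ω) : 0 ≤ ind A ω :=
  indicator_nonneg (fun _ _ => zero_le_one) ω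

theorem ind_mul_eq_indicator (A : Set Ω) (f : Ω → ℝ) :
    (fun ω => ind A ω * f ω) = A.indicator f := by
  ext ω
  by_cases hω : ω ∈ A <;> simp [ind, hω]

theorem ind_inter (A B : Set Ω) (ω : Ω) : ind (A ∩ B) ω = ind A ω * ind B ω :=
  congrFun (inter_indicator_one (M₀ := ℝ)) ω

variable [MeasurableSpace Ω] {P : Measure Ω}

theorem measurable_ind (hA : MeasurableSet A) : Measurable (ind A) :=
  measurable_const.indicator hA

theorem integral_ind_mul (hA : MeasurableSet A) (f : Ω → ℝ) :
    ∫ ω, ind A ω * f ω ∂P = ∫ ω in A, f ω ∂P := by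
  rw [ind_mul_eq_indicator, integral_indicator hA]

theorem integrable_ind_mul_iff (hA : MeasurableSet A) {f : Ω → ℝ} :
    Integrable (fun ω => ind A ω * f ω) P ↔ IntegrableOn f A P := by
  rw [ind_mul_eq_indicator, integrable_indicator_iff hA]

theorem ind_mul_ae_nonneg (A : Set Ω) {f : Ω → ℝ} (hf : 0 ≤ᵐ[P] f) :
    0 ≤ᵐ[P] fun ω => ind A ω * f ω :=
  hf.mono fun ω hω => mul_nonneg (ind_nonneg A ω) hω

end Indicator

section WeightedLaw

variable {α β γ : Type*} [MeasurableSpace Ω] [MeasurableSpace α] [MeasurableSpace β]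
  [MeasurableSpace γ] {P : Measure Ω} {s t : Ω → ℝ} {T : Ω → γ}

/-- The law of `T` under the reweighted measure `s · P`, i.e. the measure `B ↦ ∫ s · 1_B(T) dP`.
Weights are real-valued, and `ENNReal.ofReal` cuts off their negative part. -/
def weightedLaw (P : Measure Ω) (s : Ω → ℝ) (T : Ω → γ) : Measure γ :=
  (P.withDensity fun ω => ENNReal.ofReal (s ω)).map T

theorem weightedLaw_congr_ae (h : s =ᵐ[P] t) : weightedLaw P s T = weightedLaw P t T := by
  rw [weightedLaw, weightedLaw, withDensity_congr_ae (h.mono fun _ hω => congrArg _ hω)]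

theorem weightedLaw_apply (hs : Integrable s P) (hs0 : 0 ≤ᵐ[P] s) (hT : Measurable T) {B : Set γ}
    (hB : MeasurableSet B) :
    weightedLaw P s T B = ENNReal.ofReal (∫ ω in T ⁻¹' B, s ω ∂P) := by
  rw [weightedLaw, Measure.map_apply hT hB, withDensity_apply _ (hT hB),
    ofReal_integral_eq_lintegral_ofReal hs.integrableOn (ae_restrict_of_ae hs0)]

theorem integrable_weightedLaw_iff (hs : AEMeasurable s P) (hs0 : 0 ≤ᵐ[P] s) (hT : Measurable T)
    {F : γ → ℝ} (hF : Measurable F) :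
    Integrable F (weightedLaw P s T) ↔ Integrable (fun ω => s ω * F (T ω)) P := by
  rw [weightedLaw, integrable_map_measure hF.aestronglyMeasurable hT.aemeasurable,
    integrable_withDensity_iff_integrable_smul₀' hs.ennreal_ofReal (by simp)]
  refine integrable_congr ?_
  filter_upwards [hs0] with ω hω
  simp [ENNReal.toReal_ofReal hω]

theorem integral_weightedLaw (hs : AEMeasurable s P) (hs0 : 0 ≤ᵐ[P] s) (hT : Measurable T)
    {F : γ → ℝ} (hF : Measurable F) :
    ∫ x, F x ∂weightedLaw P s T = ∫ ω, s ω * F (T ω) ∂P := by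
  rw [weightedLaw, integral_map hT.aemeasurable hF.aestronglyMeasurable,
    integral_withDensity_eq_integral_toReal_smul₀ hs.ennreal_ofReal (by simp)]
  refine integral_congr_ae ?_
  filter_upwards [hs0] with ω hω
  simp [ENNReal.toReal_ofReal hω]

theorem weightedLaw_weightedLaw (hs : AEMeasurable s P) (hs0 : 0 ≤ᵐ[P] s) (hT : Measurable T)
    {k : γ → ℝ} (hk : Measurable k) {π : γ → β} (hπ : Measurable π) :
    weightedLaw (weightedLaw P s T) k π =
      weightedLaw P (fun ω => s ω * k (T ω)) (fun ω => π (T ω)) := by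
  ext B hB
  have hB' := hT (hπ hB)
  have hπT : Measurable fun ω => π (T ω) := hπ.comp hT
  have hkT : Measurable fun ω => ENNReal.ofReal (k (T ω)) := (hk.comp hT).ennreal_ofReal
  rw [weightedLaw, Measure.map_apply hπ hB, withDensity_apply _ (hπ hB), weightedLaw,
    setLIntegral_map (hπ hB) hk.ennreal_ofReal hT, restrict_withDensity hB',
    lintegral_withDensity_eq_lintegral_mul₀ hs.ennreal_ofReal.restrict hkT.aemeasurable,
    weightedLaw, Measure.map_apply hπT hB, withDensity_apply _ (hπT hB)]
  refine lintegral_congr_ae ?_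
  filter_upwards [ae_restrict_of_ae hs0] with ω hω
  simp [ENNReal.ofReal_mul hω]

theorem weightedLaw_prodMk_ext (hs : Integrable s P) (hs0 : 0 ≤ᵐ[P] s) (ht : Integrable t P)
    (ht0 : 0 ≤ᵐ[P] t) {U : Ω → α} {V : Ω → β} (hU : Measurable U) (hV : Measurable V)
    (h : ∀ B C, MeasurableSet B → MeasurableSet C →
      ∫ ω in U ⁻¹' B ∩ V ⁻¹' C, s ω ∂P = ∫ ω in U ⁻¹' B ∩ V ⁻¹' C, t ω ∂P) :
    weightedLaw P s (fun ω => (U ω, V ω)) = weightedLaw P t (fun ω => (U ω, V ω)) := by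
  have := isFiniteMeasure_withDensity_ofReal hs.2
  have : IsFiniteMeasure (weightedLaw P s fun ω => (U ω, V ω)) := by
    unfold weightedLaw; infer_instance
  refine Measure.ext_prod fun {B C} hB hC => ?_
  rw [weightedLaw_apply hs hs0 (hU.prodMk hV) (hB.prod hC),
    weightedLaw_apply ht ht0 (hU.prodMk hV) (hB.prod hC), mk_preimage_prod, h B C hB hC]

end WeightedLaw

section CondMean

variable [MeasurableSpace Ω] [MeasurableSpace 𝓧] {P : Measure Ω} {X : Ω → 𝓧} {A : Set Ω}
  {Z Z' : Ω → ℝ} {g g' : 𝓧 → ℝ}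

theorem ae_eq_of_forall_integral_mul_eq {ν : Measure 𝓧} [IsFiniteMeasure ν] (hg : Measurable g)
    (hg' : Measurable g')
    (h : ∀ k : 𝓧 → ℝ, Measurable k → (∃ C, ∀ x, |k x| ≤ C) →
      ∫ x, g x * k x ∂ν = ∫ x, g' x * k x ∂ν) :
    g =ᵐ[ν] g' := by
  -- `g` and `g'` need not be integrable, so both are tamed by the weight `r`.
  let r : 𝓧 → ℝ := fun x => (1 + |g x| + |g' x|)⁻¹
  have hr : Measurable r := by fun_prop
  have hr0 (x) : 0 < r x := by positivity
  have mul_r_le_one {a : ℝ} {x} (ha : |a| ≤ 1 + |g x| + |g' x|) : |a * r x| ≤ 1 := by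
    rw [abs_mul, abs_of_pos (hr0 x)]
    exact mul_inv_le_one_of_le₀ ha (by positivity)
  have r_le_one (x) : |r x| ≤ 1 := by
    simpa using mul_r_le_one (a := 1) (x := x) (by
      rw [abs_one]; linarith [abs_nonneg (g x), abs_nonneg (g' x)])
  have hgr : Integrable (fun x => g x * r x) ν :=
    .of_bound (hg.mul hr).aestronglyMeasurable 1
      (.of_forall fun x => mul_r_le_one (by linarith [abs_nonneg (g' x)]))
  have hgr' : Integrable (fun x => g' x * r x) ν :=
    .of_bound (hg'.mul hr).aestronglyMeasurable 1
      (.of_forall fun x => mul_r_le_one (by linarith [abs_nonneg (g x)]))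
  have key : (fun x => g x * r x) =ᵐ[ν] fun x => g' x * r x := by
    refine hgr.ae_eq_of_forall_setIntegral_eq _ _ hgr' fun s hs _ => ?_
    have hs_eq := h (s.indicator r) (hr.indicator hs)
      ⟨1, fun x => (norm_indicator_le_norm_self r x).trans (r_le_one x)⟩
    simpa only [← indicator_mul_right, integral_indicator hs] using hs_eq
  filter_upwards [key] with x hx using mul_right_cancel₀ (hr0 x).ne' hx

namespace IsCondMeanGiven

theorem congr (h : IsCondMeanGiven P X A Z g) (hA : MeasurableSet A)
    (hZ : ∀ᵐ ω ∂P.restrict A, Z ω = Z' ω) : IsCondMeanGiven P X A Z' g := by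
  refine ⟨h.1, fun k hk hkb => ?_⟩
  rw [← h.2 k hk hkb]
  refine integral_congr_ae ?_
  filter_upwards [(ae_restrict_iff' hA).1 hZ] with ω hω
  by_cases hωA : ω ∈ A
  · rw [hω hωA]
  · simp [ind, hωA]

theorem inter_preimage (h : IsCondMeanGiven P X A Z g) {N : Set 𝓧} (hN : MeasurableSet N) :
    IsCondMeanGiven P X (A ∩ X ⁻¹' N) Z g := by
  refine ⟨h.1, fun k hk ⟨C, hC⟩ => ?_⟩
  have absorb (a : ℝ) (ω : Ω) :
      ind (A ∩ X ⁻¹' N) ω * a * k (X ω) = ind A ω * a * (ind N (X ω) * k (X ω)) := by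
    rw [ind_inter, show ind (X ⁻¹' N) ω = ind N (X ω) from rfl]
    ring
  simp only [absorb]
  refine h.2 (fun x => ind N x * k x) ((measurable_ind hN).mul hk) ⟨C, fun x => ?_⟩
  rw [abs_mul]
  exact (mul_le_of_le_one_left (abs_nonneg _) (abs_ind_le_one N x)).trans (hC x)

theorem setIntegral_eq (h : IsCondMeanGiven P X A Z g) (hA : MeasurableSet A) :
    ∫ ω in A, Z ω ∂P = ∫ ω in A, g (X ω) ∂P := by
  simpa [integral_ind_mul hA] using h.2 (fun _ => 1) measurable_const ⟨1, by simp⟩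

variable [IsFiniteMeasure P]

theorem ae_eq (h : IsCondMeanGiven P X A Z g) (h' : IsCondMeanGiven P X A Z g')
    (hX : Measurable X) (hA : MeasurableSet A) : ∀ᵐ ω ∂P.restrict A, g (X ω) = g' (X ω) := by
  refine ae_of_ae_map hX.aemeasurable
    (ae_eq_of_forall_integral_mul_eq h.1 h'.1 fun k hk hkb => ?_)
  have hgk : Measurable fun x => g x * k x := h.1.mul hk
  have hgk' : Measurable fun x => g' x * k x := h'.1.mul hk
  rw [integral_map hX.aemeasurable hgk.aestronglyMeasurable,
    integral_map hX.aemeasurable hgk'.aestronglyMeasurable]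
  simpa only [mul_assoc, integral_ind_mul hA] using
    (h.2 k hk hkb).symm.trans (h'.2 k hk hkb)

-- On `{X ∈ N}` with `N = {¬ φ}`, both `p` and `0` are versions of `P(A ∣ X)`.
theorem ae_of_ae_restrict {p : 𝓧 → ℝ} (hp : IsCondMeanGiven P X univ (ind A) p)
    (hX : Measurable X) (hA : MeasurableSet A) {φ : 𝓧 → Prop} (hφ : MeasurableSet {x | φ x})
    (h : ∀ᵐ ω ∂P.restrict A, φ (X ω)) : ∀ᵐ ω ∂P, p (X ω) ≠ 0 → φ (X ω) := by
  have hN : MeasurableSet (univ ∩ X ⁻¹' {x | φ x}ᶜ) := .inter .univ (hX hφ.compl)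
  have ind_eq_zero : ∀ᵐ ω ∂P.restrict (univ ∩ X ⁻¹' {x | φ x}ᶜ), ind A ω = 0 := by
    rw [ae_restrict_iff' hN]
    filter_upwards [(ae_restrict_iff' hA).1 h] with ω hω hωN
    exact indicator_of_notMem (fun hωA => hωN.2 (hω hωA)) _
  have p_version := (hp.inter_preimage hφ.compl).congr hN ind_eq_zero
  have zero_version :
      IsCondMeanGiven P X (univ ∩ X ⁻¹' {x | φ x}ᶜ) (fun _ => 0) (fun _ => 0) :=
    ⟨measurable_const, fun _ _ _ => rfl⟩
  filter_upwards [(ae_restrict_iff' hN).1 (p_version.ae_eq zero_version hX hN)] with ω hω hpω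
  exact by_contra fun hφω => hpω (hω ⟨mem_univ ω, hφω⟩)

end IsCondMeanGiven

end CondMean

section Identification

variable {X : Ω → 𝓧} {Y0 Y2 D1 D2 S : Ω → ℝ} {Y0p Y2p : ℝ × ℝ → Ω → ℝ} {d : ℝ × ℝ}
  {q : ℝ → 𝓧 → ℝ}

theorem ind_evD (D1 D2 : Ω → ℝ) (d : ℝ × ℝ) (ω : Ω) :
    ind (evD D1 D2 d) ω = ind (evD2 D2 d.2) ω * ind {d.1} (D1 ω) := by
  rw [mul_comm]
  exact ind_inter (D1 ⁻¹' {d.1}) (evD2 D2 d.2) ω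

theorem sub_eq_of_mem_evD (hcons0 : ∀ ω, Y0 ω = Y0p (D1 ω, D2 ω) ω)
    (hcons2 : ∀ ω, Y2 ω = Y2p (D1 ω, D2 ω) ω) {ω : Ω} (hω : ω ∈ evD D1 D2 d) :
    Y2 ω - Y0 ω = Y2p d ω - Y0p d ω := by
  rw [hcons0, hcons2, hω.1, hω.2]

variable [MeasurableSpace Ω] [MeasurableSpace 𝓧] {P : Measure Ω}

theorem measurableSet_evD (hD1 : Measurable D1) (hD2 : Measurable D2) (d : ℝ × ℝ) :
    MeasurableSet (evD D1 D2 d) :=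
  (hD1 (measurableSet_singleton d.1)).inter (hD2 (measurableSet_singleton d.2))

namespace MAR

theorem prob_ae_nonneg (hMAR : MAR P X D1 D2 S Y0 Y2 q) {b : ℝ} (hb : b ∈ ({0, 1} : Set ℝ)) :
    0 ≤ᵐ[P] fun ω => q b (X ω) :=
  (hMAR.2.1 b hb).mono fun _ hω => hω.1.le

theorem ipw_ae_nonneg (hMAR : MAR P X D1 D2 S Y0 Y2 q) (hS0 : 0 ≤ᵐ[P] S)
    (hd2 : d.2 ∈ ({0, 1} : Set ℝ)) :
    0 ≤ᵐ[P] fun ω => S ω / q d.2 (X ω) * ind (evD D1 D2 d) ω := by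
  filter_upwards [hS0, hMAR.prob_ae_nonneg hd2] with ω hSω hqω
  exact mul_nonneg (div_nonneg hSω hqω) (ind_nonneg _ ω)

theorem aemeasurable_ipw (hMAR : MAR P X D1 D2 S Y0 Y2 q) (hX : Measurable X) (hD1 : Measurable D1)
    (hD2 : Measurable D2) (hS : AEMeasurable S P) (hd2 : d.2 ∈ ({0, 1} : Set ℝ)) :
    AEMeasurable (fun ω => S ω / q d.2 (X ω) * ind (evD D1 D2 d) ω) P :=
  (hS.div ((hMAR.1 d.2 hd2).1.comp hX).aemeasurable).mul
    (measurable_ind (measurableSet_evD hD1 hD2 d)).aemeasurable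

variable [IsFiniteMeasure P]

theorem integrable_prob (hMAR : MAR P X D1 D2 S Y0 Y2 q) (hX : Measurable X) {b : ℝ}
    (hb : b ∈ ({0, 1} : Set ℝ)) : Integrable (fun ω => q b (X ω)) P := by
  refine .of_bound ((hMAR.1 b hb).1.comp hX).aestronglyMeasurable 1 ?_
  filter_upwards [hMAR.2.1 b hb] with ω hω
  rw [Real.norm_of_nonneg hω.1.le]
  exact hω.2

theorem weightedLaw_eq (hMAR : MAR P X D1 D2 S Y0 Y2 q) (hX : Measurable X) (hD1 : Measurable D1)
    (hD2 : Measurable D2) (hΔ : Measurable fun ω => Y2 ω - Y0 ω) (hS : Integrable S P)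
    (hS0 : 0 ≤ᵐ[P] S) {b : ℝ} (hb : b ∈ ({0, 1} : Set ℝ)) :
    weightedLaw P (fun ω => ind (evD2 D2 b) ω * S ω) (fun ω => ((D1 ω, Y2 ω - Y0 ω), X ω)) =
      weightedLaw P (fun ω => ind (evD2 D2 b) ω * q b (X ω))
        (fun ω => ((D1 ω, Y2 ω - Y0 ω), X ω)) := by
  have hE : MeasurableSet (evD2 D2 b) := hD2 (measurableSet_singleton b)
  refine weightedLaw_prodMk_ext ((integrable_ind_mul_iff hE).2 hS.integrableOn)
    (ind_mul_ae_nonneg _ hS0)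
    ((integrable_ind_mul_iff hE).2 (hMAR.integrable_prob hX hb).integrableOn)
    (ind_mul_ae_nonneg _ (hMAR.prob_ae_nonneg hb)) (hD1.prodMk hΔ) hX fun B C hB hC => ?_
  have rectangle := hMAR.2.2 b hb (ind B) (measurable_ind hB) ⟨1, abs_ind_le_one B⟩ (ind C)
    (measurable_ind hC) ⟨1, abs_ind_le_one C⟩
  have hBC := (hD1.prodMk hΔ hB).inter (hX hC)
  rw [← integral_ind_mul hBC, ← integral_ind_mul hBC]
  simp only [ind_inter]
  convert rectangle using 3 <;> rw [mul_comm, ← mul_assoc] <;> rfl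

theorem weightedLaw_ipw (hMAR : MAR P X D1 D2 S Y0 Y2 q) (hX : Measurable X) (hD1 : Measurable D1)
    (hD2 : Measurable D2) (hΔ : Measurable fun ω => Y2 ω - Y0 ω) (hS : Integrable S P)
    (hS0 : 0 ≤ᵐ[P] S) (hd2 : d.2 ∈ ({0, 1} : Set ℝ)) :
    weightedLaw P (fun ω => S ω / q d.2 (X ω) * ind (evD D1 D2 d) ω)
        (fun ω => (Y2 ω - Y0 ω, X ω)) =
      weightedLaw P (ind (evD D1 D2 d)) (fun ω => (Y2 ω - Y0 ω, X ω)) := by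
  let T : Ω → (ℝ × ℝ) × 𝓧 := fun ω => ((D1 ω, Y2 ω - Y0 ω), X ω)
  let k : (ℝ × ℝ) × 𝓧 → ℝ := fun z => ind {d.1} z.1.1 / q d.2 z.2
  let π : (ℝ × ℝ) × 𝓧 → ℝ × 𝓧 := fun z => (z.1.2, z.2)
  have hT : Measurable T := (hD1.prodMk hΔ).prodMk hX
  have hq : Measurable (q d.2) := (hMAR.1 d.2 hd2).1
  have hk : Measurable k := ((measurable_ind (measurableSet_singleton d.1)).comp
    measurable_fst.fst).div (hq.comp measurable_snd)
  have hπ : Measurable π := by fun_prop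
  have hE : Measurable (ind (evD2 D2 d.2)) := measurable_ind (hD2 (measurableSet_singleton d.2))
  have hsS : AEMeasurable (fun ω => ind (evD2 D2 d.2) ω * S ω) P :=
    hE.aemeasurable.mul hS.aemeasurable
  have hsq : AEMeasurable (fun ω => ind (evD2 D2 d.2) ω * q d.2 (X ω)) P :=
    (hE.mul (hq.comp hX)).aemeasurable
  calc weightedLaw P (fun ω => S ω / q d.2 (X ω) * ind (evD D1 D2 d) ω)
        (fun ω => (Y2 ω - Y0 ω, X ω))
      = weightedLaw P (fun ω => ind (evD2 D2 d.2) ω * S ω * k (T ω)) (fun ω => π (T ω)) := by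
        congr with ω
        rw [ind_evD]
        ring
    _ = weightedLaw P (fun ω => ind (evD2 D2 d.2) ω * q d.2 (X ω) * k (T ω))
          (fun ω => π (T ω)) := by
        rw [← weightedLaw_weightedLaw hsS (ind_mul_ae_nonneg _ hS0) hT hk hπ,
          ← weightedLaw_weightedLaw hsq (ind_mul_ae_nonneg _ (hMAR.prob_ae_nonneg hd2)) hT hk hπ,
          hMAR.weightedLaw_eq hX hD1 hD2 hΔ hS hS0 hd2]
    _ = weightedLaw P (ind (evD D1 D2 d)) (fun ω => (Y2 ω - Y0 ω, X ω)) := by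
        refine weightedLaw_congr_ae ?_
        filter_upwards [hMAR.2.1 d.2 hd2] with ω hω
        rw [ind_evD, mul_assoc, mul_div_cancel₀ _ hω.1.ne']

theorem integral_ipw_mul (hMAR : MAR P X D1 D2 S Y0 Y2 q) (hX : Measurable X)
    (hD1 : Measurable D1) (hD2 : Measurable D2) (hΔ : Measurable fun ω => Y2 ω - Y0 ω)
    (hS : Integrable S P) (hS0 : 0 ≤ᵐ[P] S) (hd2 : d.2 ∈ ({0, 1} : Set ℝ)) {F : ℝ × 𝓧 → ℝ}
    (hF : Measurable F) :
    ∫ ω, S ω / q d.2 (X ω) * ind (evD D1 D2 d) ω * F (Y2 ω - Y0 ω, X ω) ∂P =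
      ∫ ω in evD D1 D2 d, F (Y2 ω - Y0 ω, X ω) ∂P := by
  have hA := measurableSet_evD hD1 hD2 d
  rw [← integral_weightedLaw (hMAR.aemeasurable_ipw hX hD1 hD2 hS.aemeasurable hd2)
      (hMAR.ipw_ae_nonneg hS0 hd2) (hΔ.prodMk hX) hF,
    hMAR.weightedLaw_ipw hX hD1 hD2 hΔ hS hS0 hd2,
    integral_weightedLaw (measurable_ind hA).aemeasurable (.of_forall (ind_nonneg _))
      (hΔ.prodMk hX) hF,
    integral_ind_mul hA]

theorem integrable_ipw_mul_iff (hMAR : MAR P X D1 D2 S Y0 Y2 q) (hX : Measurable X)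
    (hD1 : Measurable D1) (hD2 : Measurable D2) (hΔ : Measurable fun ω => Y2 ω - Y0 ω)
    (hS : Integrable S P) (hS0 : 0 ≤ᵐ[P] S) (hd2 : d.2 ∈ ({0, 1} : Set ℝ)) {F : ℝ × 𝓧 → ℝ}
    (hF : Measurable F) :
    Integrable (fun ω => S ω / q d.2 (X ω) * ind (evD D1 D2 d) ω * F (Y2 ω - Y0 ω, X ω)) P ↔
      IntegrableOn (fun ω => F (Y2 ω - Y0 ω, X ω)) (evD D1 D2 d) P := by
  have hA := measurableSet_evD hD1 hD2 d
  rw [← integrable_weightedLaw_iff (hMAR.aemeasurable_ipw hX hD1 hD2 hS.aemeasurable hd2)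
      (hMAR.ipw_ae_nonneg hS0 hd2) (hΔ.prodMk hX) hF,
    hMAR.weightedLaw_ipw hX hD1 hD2 hΔ hS hS0 hd2,
    integrable_weightedLaw_iff (measurable_ind hA).aemeasurable (.of_forall (ind_nonneg _))
      (hΔ.prodMk hX) hF,
    integrable_ind_mul_iff hA]

end MAR

theorem DID.setIntegral_no_anticipation (hDID : DID P X D1 D2 Y0p Y2p d)
    (hA : MeasurableSet (evD D1 D2 d)) :
    ∫ ω in evD D1 D2 d, Y0p d ω ∂P = ∫ ω in evD D1 D2 d, Y0p (0, 0) ω ∂P := by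
  simpa [integral_ind_mul hA] using hDID.1 (fun _ => 1) measurable_const ⟨1, by simp⟩

theorem setIntegral_trend_eq_of_overlap [IsFiniteMeasure P] (hX : Measurable X)
    (hD1 : Measurable D1) (hD2 : Measurable D2)
    (hcons0 : ∀ ω, Y0 ω = Y0p (D1 ω, D2 ω) ω) (hcons2 : ∀ ω, Y2 ω = Y2p (D1 ω, D2 ω) ω)
    (hDIDd : DID P X D1 D2 Y0p Y2p d) (hDIDd' : DID P X D1 D2 Y0p Y2p (0, 0))
    {pd' : 𝓧 → ℝ} (hpd' : IsCondMeanGiven P X univ (ind (evD D1 D2 (0, 0))) pd')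
    (hpd'pos : ∀ᵐ ω ∂P, ω ∈ evD D1 D2 d → 0 < pd' (X ω)) {md' : 𝓧 → ℝ}
    (hmd' : IsCondMeanGiven P X (evD D1 D2 (0, 0)) (fun ω => Y2 ω - Y0 ω) md') :
    ∫ ω in evD D1 D2 d, (Y2p (0, 0) ω - Y0p (0, 0) ω) ∂P = ∫ ω in evD D1 D2 d, md' (X ω) ∂P := by
  have hA := measurableSet_evD hD1 hD2 d
  have hA' := measurableSet_evD hD1 hD2 (0, 0)
  obtain ⟨-, tr, htr_univ, htr⟩ := hDIDd
  obtain ⟨-, tr', htr'_univ, htr'⟩ := hDIDd'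
  have tr_eq_tr' : ∀ᵐ ω ∂P, tr (X ω) = tr' (X ω) := by
    simpa using htr_univ.ae_eq htr'_univ hX .univ
  have md'_eq_on_untreated : ∀ᵐ ω ∂P.restrict (evD D1 D2 (0, 0)), md' (X ω) = tr' (X ω) :=
    (hmd'.congr hA' (ae_restrict_of_forall_mem hA' fun _ => sub_eq_of_mem_evD hcons0 hcons2)).ae_eq
      htr' hX hA'
  have md'_eq_of_overlap : ∀ᵐ ω ∂P, pd' (X ω) ≠ 0 → md' (X ω) = tr' (X ω) :=
    hpd'.ae_of_ae_restrict hX hA' (measurableSet_eq_fun hmd'.1 htr'.1) md'_eq_on_untreated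
  rw [htr.setIntegral_eq hA]
  refine setIntegral_congr_ae hA ?_
  filter_upwards [tr_eq_tr', md'_eq_of_overlap, hpd'pos] with ω htrω hmdω hpω hωA
  rw [htrω, hmdω (hpω hωA).ne']

theorem setIntegral_sub_eq_treatment_effect (hA : MeasurableSet (evD D1 D2 d))
    (hcons0 : ∀ ω, Y0 ω = Y0p (D1 ω, D2 ω) ω) (hcons2 : ∀ ω, Y2 ω = Y2p (D1 ω, D2 ω) ω)
    (hY0d : Integrable (Y0p d) P) (hY2d : Integrable (Y2p d) P)
    (hY0z : Integrable (Y0p (0, 0)) P) (hY2z : Integrable (Y2p (0, 0)) P)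
    (hna : ∫ ω in evD D1 D2 d, Y0p d ω ∂P = ∫ ω in evD D1 D2 d, Y0p (0, 0) ω ∂P)
    {m : Ω → ℝ} (hm : ∫ ω in evD D1 D2 d, (Y2p (0, 0) ω - Y0p (0, 0) ω) ∂P =
      ∫ ω in evD D1 D2 d, m ω ∂P)
    (hint : IntegrableOn (fun ω => Y2 ω - Y0 ω - m ω) (evD D1 D2 d) P) :
    ∫ ω in evD D1 D2 d, (Y2 ω - Y0 ω - m ω) ∂P =
      ∫ ω in evD D1 D2 d, (Y2p d ω - Y2p (0, 0) ω) ∂P := by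
  have hΔd : EqOn (fun ω => Y2 ω - Y0 ω) (fun ω => Y2p d ω - Y0p d ω) (evD D1 D2 d) :=
    fun _ => sub_eq_of_mem_evD hcons0 hcons2
  have hΔi : IntegrableOn (fun ω => Y2 ω - Y0 ω) (evD D1 D2 d) P :=
    (hY2d.sub hY0d).integrableOn.congr_fun hΔd.symm hA
  have hmi : IntegrableOn m (evD D1 D2 d) P := by
    simpa [sub_sub_cancel, Pi.sub_def] using hΔi.sub hint
  rw [integral_sub hΔi hmi, setIntegral_congr_fun hA hΔd, ← hm,
    integral_sub hY2d.integrableOn hY0d.integrableOn,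
    integral_sub hY2z.integrableOn hY0z.integrableOn,
    integral_sub hY2d.integrableOn hY2z.integrableOn, hna]
  ring

end Identification

theorem statement_8_general [MeasurableSpace Ω] [MeasurableSpace 𝓧] {P : Measure Ω}
    [IsFiniteMeasure P] {X : Ω → 𝓧} (hX : Measurable X) {Y0 Y2 D1 D2 S : Ω → ℝ}
    (hΔ : Measurable fun ω => Y2 ω - Y0 ω) (hD1 : Measurable D1) (hD2 : Measurable D2)
    (hS : Integrable S P) (hS0 : 0 ≤ᵐ[P] S) {Y0p Y2p : ℝ × ℝ → Ω → ℝ} {d : ℝ × ℝ}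
    (hd2 : d.2 ∈ ({0, 1} : Set ℝ))
    (hY0d : Integrable (Y0p d) P) (hY2d : Integrable (Y2p d) P)
    (hY0z : Integrable (Y0p (0, 0)) P) (hY2z : Integrable (Y2p (0, 0)) P)
    (hcons0 : ∀ ω, Y0 ω = Y0p (D1 ω, D2 ω) ω) (hcons2 : ∀ ω, Y2 ω = Y2p (D1 ω, D2 ω) ω)
    (hPd : 0 < P (evD D1 D2 d))
    (hDIDd : DID P X D1 D2 Y0p Y2p d) (hDIDd' : DID P X D1 D2 Y0p Y2p (0, 0))
    {q : ℝ → 𝓧 → ℝ} (hMAR : MAR P X D1 D2 S Y0 Y2 q)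
    {pd' : 𝓧 → ℝ} (hpd' : IsCondMeanGiven P X univ (ind (evD D1 D2 (0, 0))) pd')
    (hpd'pos : ∀ᵐ ω ∂P, ω ∈ evD D1 D2 d → 0 < pd' (X ω)) {md' : 𝓧 → ℝ}
    (hmd' : IsCondMeanGiven P X (evD D1 D2 (0, 0)) (fun ω => Y2 ω - Y0 ω) md')
    (hfin : Integrable (fun ω =>
      S ω / q d.2 (X ω) * ind (evD D1 D2 d) ω * (Y2 ω - Y0 ω - md' (X ω))) P) :
    0 < ∫ ω, S ω / q d.2 (X ω) * ind (evD D1 D2 d) ω ∂P ∧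
      (∫ ω, S ω / q d.2 (X ω) * ind (evD D1 D2 d) ω ∂P)⁻¹
          * ∫ ω, S ω / q d.2 (X ω) * ind (evD D1 D2 d) ω * (Y2 ω - Y0 ω - md' (X ω)) ∂P
        = tau P D1 D2 Y2p d := by
  have hA := measurableSet_evD hD1 hD2 d
  have hF : Measurable fun z : ℝ × 𝓧 => z.1 - md' z.2 :=
    measurable_fst.sub (hmd'.1.comp measurable_snd)
  have denominator : ∫ ω, S ω / q d.2 (X ω) * ind (evD D1 D2 d) ω ∂P = P.real (evD D1 D2 d) := by
    simpa using hMAR.integral_ipw_mul hX hD1 hD2 hΔ hS hS0 hd2 (measurable_const (a := (1 : ℝ)))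
  have no_anticipation := hDIDd.setIntegral_no_anticipation hA
  have trend :=
    setIntegral_trend_eq_of_overlap hX hD1 hD2 hcons0 hcons2 hDIDd hDIDd' hpd' hpd'pos hmd'
  have numerator :
      ∫ ω, S ω / q d.2 (X ω) * ind (evD D1 D2 d) ω * (Y2 ω - Y0 ω - md' (X ω)) ∂P =
        ∫ ω in evD D1 D2 d, (Y2p d ω - Y2p (0, 0) ω) ∂P :=
    (hMAR.integral_ipw_mul hX hD1 hD2 hΔ hS hS0 hd2 hF).trans <|
      setIntegral_sub_eq_treatment_effect hA hcons0 hcons2 hY0d hY2d hY0z hY2z no_anticipation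
        trend ((hMAR.integrable_ipw_mul_iff hX hD1 hD2 hΔ hS hS0 hd2 hF).1 hfin)
  rw [denominator, numerator]
  exact ⟨ENNReal.toReal_pos hPd.ne' (measure_ne_top P _), rfl⟩

/-- Corollary 2, part 1: missingness-adjusted outcome regression identifies the PDATT. -/
theorem statement_8
    [MeasurableSpace Ω] [m𝓧 : MeasurableSpace 𝓧]
    (P : Measure Ω) [IsProbabilityMeasure P]
    (X : Ω → 𝓧) (hX : Measurable X)
    (Y0 Y2 D1 D2 S : Ω → ℝ)
    (hY0 : Measurable Y0) (hY2 : Measurable Y2)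
    (hD1 : Measurable D1) (hD2 : Measurable D2) (hS : Measurable S)
    (hY0i : Integrable Y0 P) (hY2i : Integrable Y2 P)
    (hD1v : ∀ ω, D1 ω = 0 ∨ D1 ω = 1) (hD2v : ∀ ω, D2 ω = 0 ∨ D2 ω = 1)
    (hSv : ∀ ω, S ω = 0 ∨ S ω = 1)
    (Y0p Y2p : ℝ × ℝ → Ω → ℝ)
    (hY0p : ∀ e ∈ allPaths, Measurable (Y0p e) ∧ Integrable (Y0p e) P)
    (hY2p : ∀ e ∈ allPaths, Measurable (Y2p e) ∧ Integrable (Y2p e) P)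
    (hcons0 : ∀ ω, Y0 ω = Y0p (D1 ω, D2 ω) ω)
    (hcons2 : ∀ ω, Y2 ω = Y2p (D1 ω, D2 ω) ω)
    (d : ℝ × ℝ) (hd : d ∈ threePaths) (hPd : 0 < P (evD D1 D2 d))
    (hDIDd : DID P X D1 D2 Y0p Y2p d) (hDIDd' : DID P X D1 D2 Y0p Y2p (0, 0))
    (q : ℝ → 𝓧 → ℝ) (hMAR : MAR P X D1 D2 S Y0 Y2 q)
    (pd pd' : 𝓧 → ℝ)
    (hpd : IsCondMeanGiven P X Set.univ (ind (evD D1 D2 d)) pd)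
    (hpd' : IsCondMeanGiven P X Set.univ (ind (evD D1 D2 (0, 0))) pd')
    (hpdpos : ∀ᵐ ω ∂P, 0 < pd (X ω)) (hpd'pos : ∀ᵐ ω ∂P, 0 < pd' (X ω))
    (md' : 𝓧 → ℝ)
    (hmd' : IsCondMeanGiven P X (evD D1 D2 (0, 0)) (fun ω => Y2 ω - Y0 ω) md')
    (hfin1 : Integrable (fun ω => S ω / q d.2 (X ω) * ind (evD D1 D2 d) ω) P)
    (hfin2 : Integrable (fun ω =>
        S ω / q d.2 (X ω) * ind (evD D1 D2 d) ω * (Y2 ω - Y0 ω - md' (X ω))) P) :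
    (∫ ω, S ω / q d.2 (X ω) * ind (evD D1 D2 d) ω ∂P)⁻¹
        * ∫ ω, S ω / q d.2 (X ω) * ind (evD D1 D2 d) ω * (Y2 ω - Y0 ω - md' (X ω)) ∂P
      = tau P D1 D2 Y2p d := by
  have hS01 : ∀ ω, 0 ≤ S ω ∧ ‖S ω‖ ≤ 1 := fun ω => by rcases hSv ω with h | h <;> simp [h]
  have hd2 : d.2 ∈ ({0, 1} : Set ℝ) := by rcases hd with rfl | rfl | rfl <;> simp
  have hdmem : d ∈ allPaths := by rcases hd with rfl | rfl | rfl <;> simp [allPaths]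
  have hzmem : ((0, 0) : ℝ × ℝ) ∈ allPaths := by simp [allPaths]
  exact (statement_8_general hX (hY2.sub hY0) hD1 hD2
    (.of_bound hS.aestronglyMeasurable 1 (.of_forall fun ω => (hS01 ω).2))
    (.of_forall fun ω => (hS01 ω).1) hd2 (hY0p d hdmem).2 (hY2p d hdmem).2 (hY0p _ hzmem).2
    (hY2p _ hzmem).2 hcons0 hcons2 hPd hDIDd hDIDd' hMAR hpd' (hpd'pos.mono fun _ h _ => h) hmd'
    hfin2).2

end DIDMissing
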